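/- Let n ≥ 2 and let x ∈ M_n be a colored diameter (red or blue). Then there exists a bijection from the set L(x) = {y ∈ M_n : y ≠ x and y is compatible with x} to the set of diagonals of a convex (n+2)-gon such that two distinct elements of L(x) are compatible if and only if their image diagonals do not cross. (That is, the link of a diameter in the type D_n model is isomorphic to the type A_{n−1} model.) -/

import Mathlib

open Pointwise

namespace GalD

/-- A polytope in `ℝ^d`: the convex hull of a finite set of points. -/
def IsPolytope {d : ℕ} (P : Set (Fin d → ℝ)) : Prop :=
  ∃ V : Finset (Fin d → ℝ), P = convexHull ℝ (V : Set (Fin d → ℝ))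

/-- A face of `P`: a nonempty exposed face of `P` (`P` itself included). -/
def IsFaceOf {d : ℕ} (F P : Set (Fin d → ℝ)) : Prop :=
  F.Nonempty ∧ IsExposed ℝ P F

/-- The dimension of a set: the rank of the direction of its affine span. -/
noncomputable def polyDim {d : ℕ} (P : Set (Fin d → ℝ)) : ℕ :=
  Module.finrank ℝ (affineSpan ℝ P).direction

/-- A facet: a face of dimension `dim P - 1`. -/
def IsFacetOf {d : ℕ} (F P : Set (Fin d → ℝ)) : Prop :=
  IsFaceOf F P ∧ polyDim F + 1 = polyDim P

/-- A vertex: a point spanning a face of dimension 0. -/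
def IsVertexOf {d : ℕ} (v : Fin d → ℝ) (P : Set (Fin d → ℝ)) : Prop :=
  IsFaceOf {v} P

/-- A simple polytope: every vertex is contained in exactly `dim P` facets. -/
def IsSimplePolytope {d : ℕ} (P : Set (Fin d → ℝ)) : Prop :=
  IsPolytope P ∧ ∀ v, IsVertexOf v P →
    {F : Set (Fin d → ℝ) | IsFacetOf F P ∧ v ∈ F}.ncard = polyDim P

/-- A flag polytope: simple, and every collection of pairwise intersecting facets
has a nonempty common intersection. -/
def IsFlagPolytope {d : ℕ} (P : Set (Fin d → ℝ)) : Prop :=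
  IsSimplePolytope P ∧
  ∀ 𝒮 : Set (Set (Fin d → ℝ)), 𝒮.Nonempty → (∀ F ∈ 𝒮, IsFacetOf F P) →
    (∀ F ∈ 𝒮, ∀ G ∈ 𝒮, (F ∩ G).Nonempty) → (⋂₀ 𝒮).Nonempty

/-- Combinatorial equivalence: an order isomorphism between the face posets. -/
def CombEquiv {d₁ d₂ : ℕ} (P : Set (Fin d₁ → ℝ)) (Q : Set (Fin d₂ → ℝ)) : Prop :=
  Nonempty ({F : Set (Fin d₁ → ℝ) // IsFaceOf F P} ≃o
            {G : Set (Fin d₂ → ℝ) // IsFaceOf G Q})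

/-- The product of a set in `ℝ^{d₁}` and a set in `ℝ^{d₂}`, inside `ℝ^{d₁+d₂}`. -/
def polyProd {d₁ d₂ : ℕ} (Q : Set (Fin d₁ → ℝ)) (R : Set (Fin d₂ → ℝ)) :
    Set (Fin (d₁ + d₂) → ℝ) :=
  {x | (fun i => x (Fin.castAdd d₂ i)) ∈ Q ∧ (fun j => x (Fin.natAdd d₁ j)) ∈ R}

/-- `P` is not combinatorially equivalent to a nontrivial product of two polytopes. -/
def Indecomposable {d : ℕ} (P : Set (Fin d → ℝ)) : Prop :=
  ¬ ∃ (d₁ d₂ : ℕ) (Q : Set (Fin d₁ → ℝ)) (R : Set (Fin d₂ → ℝ)),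
    IsPolytope Q ∧ IsPolytope R ∧ 1 ≤ polyDim Q ∧ 1 ≤ polyDim R ∧
    CombEquiv P (polyProd Q R)

/-- A building set on the ground set `V`. -/
structure IsBuildingSetOn {m : ℕ} (V : Finset (Fin m)) (B : Finset (Finset (Fin m))) :
    Prop where
  subset_ground : ∀ S ∈ B, S ⊆ V
  nonempty_mem : ∀ S ∈ B, S.Nonempty
  singleton_mem : ∀ i ∈ V, ({i} : Finset (Fin m)) ∈ B
  ground_mem : V ∈ B
  union_mem : ∀ S₁ ∈ B, ∀ S₂ ∈ B, (S₁ ∩ S₂).Nonempty → S₁ ∪ S₂ ∈ B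

/-- A connected building set on `[m]`. -/
def IsConnectedBuildingSet (m : ℕ) (B : Finset (Finset (Fin m))) : Prop :=
  IsBuildingSetOn (Finset.univ : Finset (Fin m)) B

/-- The nestohedron `P_B`: the Minkowski sum of the simplices `Δ_S`, `S ∈ B`. -/
noncomputable def nestohedron (m : ℕ) (B : Finset (Finset (Fin m))) :
    Set (Fin m → ℝ) :=
  ∑ S ∈ B, convexHull ℝ ((fun i => (Pi.single i 1 : Fin m → ℝ)) '' (S : Set (Fin m)))

/-- A diagonal of a convex `N`-gon with vertices labelled by `ZMod N`. -/
def IsDiag (N : ℕ) (e : Finset (ZMod N)) : Prop :=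
  ∃ a b : ZMod N, e = {a, b} ∧ b ≠ a ∧ b ≠ a + 1 ∧ b ≠ a - 1

/-- `c` lies strictly between `a` and `b` on the arc from `a` to `b` (counterclockwise). -/
def StrictBtw (N : ℕ) (a c b : ZMod N) : Prop :=
  0 < (c - a).val ∧ (c - a).val < (b - a).val

/-- Two diagonals cross: their endpoints alternate around the circle. -/
def Crosses (N : ℕ) (e f : Finset (ZMod N)) : Prop :=
  ∃ a b c d : ZMod N, e = {a, b} ∧ f = {c, d} ∧
    StrictBtw N a c b ∧ StrictBtw N b d a

/-- Image of a diagonal under the central symmetry `a ↦ a + n` of the `2n`-gon. -/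
def centralSym (n : ℕ) (e : Finset (ZMod (2 * n))) : Finset (ZMod (2 * n)) :=
  e.image (· + (n : ZMod (2 * n)))

/-- A diameter of the `2n`-gon: a diagonal `{a, a + n}`. -/
def IsDiameter (n : ℕ) (e : Finset (ZMod (2 * n))) : Prop :=
  ∃ a : ZMod (2 * n), e = {a, a + (n : ZMod (2 * n))}

/-- Raw elements of the type `D_n` model: symmetric pairs of diagonals,
red diameters and blue diameters. -/
inductive DElem (n : ℕ) where
  | pair : Finset (Finset (ZMod (2 * n))) → DElem n
  | red  : Finset (ZMod (2 * n)) → DElem n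
  | blue : Finset (ZMod (2 * n)) → DElem n

/-- Membership in the set `M_n` of the type `D_n` model. -/
def memM (n : ℕ) : DElem n → Prop
  | .pair s => ∃ e, IsDiag (2 * n) e ∧ ¬ IsDiameter n e ∧ s = {e, centralSym n e}
  | .red e => IsDiag (2 * n) e ∧ IsDiameter n e
  | .blue e => IsDiag (2 * n) e ∧ IsDiameter n e

/-- Compatibility of elements of the type `D_n` model. -/
def DCompat (n : ℕ) : DElem n → DElem n → Prop
  | .pair s, .pair t => ∀ e ∈ s, ∀ f ∈ t, ¬ Crosses (2 * n) e f
  | .pair s, .red e => ∀ f ∈ s, ¬ Crosses (2 * n) e f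
  | .pair s, .blue e => ∀ f ∈ s, ¬ Crosses (2 * n) e f
  | .red e, .pair s => ∀ f ∈ s, ¬ Crosses (2 * n) e f
  | .blue e, .pair s => ∀ f ∈ s, ¬ Crosses (2 * n) e f
  | .red _, .red _ => True
  | .blue _, .blue _ => True
  | .red e, .blue f => e = f
  | .blue e, .red f => e = f

/-- The set `M_n` of the type `D_n` model, as a type. -/
def MSet (n : ℕ) := {x : DElem n // memM n x}

/-- `P` realizes the type `D_n` model via the bijection `φ`. -/
def RealizesDWith (n : ℕ) {d : ℕ} (P : Set (Fin d → ℝ))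
    (φ : MSet n → Set (Fin d → ℝ)) : Prop :=
  IsPolytope P ∧ IsFlagPolytope P ∧ polyDim P = n ∧
  (∀ x, IsFacetOf (φ x) P) ∧ Function.Injective φ ∧
  (∀ F, IsFacetOf F P → ∃ x, φ x = F) ∧
  ∀ x y : MSet n, x ≠ y → ((φ x ∩ φ y).Nonempty ↔ DCompat n x.1 y.1)

/-- `P` realizes the type `D_n` model. -/
def RealizesD (n : ℕ) {d : ℕ} (P : Set (Fin d → ℝ)) : Prop :=
  ∃ φ, RealizesDWith n P φ

/-- Elements of the type `A_k` model: diagonals of a convex `(k+3)`-gon. -/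
def ASet (k : ℕ) := {e : Finset (ZMod (k + 3)) // IsDiag (k + 3) e}

/-- `P` realizes the type `A_k` model via the bijection `φ`. -/
def RealizesAWith (k : ℕ) {d : ℕ} (P : Set (Fin d → ℝ))
    (φ : ASet k → Set (Fin d → ℝ)) : Prop :=
  IsPolytope P ∧ IsFlagPolytope P ∧ polyDim P = k ∧
  (∀ x, IsFacetOf (φ x) P) ∧ Function.Injective φ ∧
  (∀ F, IsFacetOf F P → ∃ x, φ x = F) ∧
  ∀ x y : ASet k, x ≠ y → ((φ x ∩ φ y).Nonempty ↔ ¬ Crosses (k + 3) x.1 y.1)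

/-- `P` realizes the type `A_k` model. -/
def RealizesA (k : ℕ) {d : ℕ} (P : Set (Fin d → ℝ)) : Prop :=
  ∃ φ, RealizesAWith k P φ

/-- A closed halfspace in `ℝ^d`. -/
def IsClosedHalfspace {d : ℕ} (H : Set (Fin d → ℝ)) : Prop :=
  ∃ (l : (Fin d → ℝ) →ₗ[ℝ] ℝ) (c : ℝ), l ≠ 0 ∧ H = {x | l x ≤ c}

/-- `P'` is obtained from `P` by shaving off a face of codimension 2. -/
def ObtainedByShaving {d : ℕ} (P P' : Set (Fin d → ℝ)) : Prop :=
  ∃ G H : Set (Fin d → ℝ), IsFaceOf G P ∧ polyDim G + 2 = polyDim P ∧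
    IsClosedHalfspace H ∧ G ∩ H = ∅ ∧
    (∀ v, IsVertexOf v P → v ∉ G → v ∈ interior H) ∧ P' = P ∩ H

/-- The restriction `B|_S` of a building set. -/
def restrictBS {m : ℕ} (B : Finset (Finset (Fin m))) (S : Finset (Fin m)) :
    Finset (Finset (Fin m)) :=
  B.filter (· ⊆ S)

/-- The contraction `B / S` of a building set. -/
def contractBS {m : ℕ} (B : Finset (Finset (Fin m))) (S : Finset (Fin m)) :
    Finset (Finset (Fin m)) :=
  (B.filter (fun S'' => ¬ S'' ⊆ S)).image (fun S'' => S'' \ S)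

/-- The subset of the nestohedron `P_B` on which `x ↦ ∑_{i ∈ S} x i` is minimized. -/
def minFace (m : ℕ) (B : Finset (Finset (Fin m))) (S : Finset (Fin m)) :
    Set (Fin m → ℝ) :=
  {x ∈ nestohedron m B | ∀ y ∈ nestohedron m B, ∑ i ∈ S, x i ≤ ∑ i ∈ S, y i}


/-- Point number `i` counted from the base point `a`. -/
def pt (N : ℕ) (a : ZMod N) (i : ℕ) : ZMod N := a + (i : ZMod N)

/-- The segment between points `i` and `j` counted from `a`. -/
def seg (N : ℕ) (a : ZMod N) (i j : ℕ) : Finset (ZMod N) := {pt N a i, pt N a j}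

theorem pt_sub_val (N : ℕ) (a : ZMod N) {i k : ℕ} (hi : i < N) (hk : k < N) :
    (pt N a k - pt N a i).val = if i ≤ k then k - i else k + N - i := by
  have e : pt N a k - pt N a i = ((if i ≤ k then k - i else k + N - i : ℕ) : ZMod N) := by
    unfold pt
    split_ifs with h
    · rw [Nat.cast_sub h]; ring
    · rw [Nat.cast_sub (by omega)]; push_cast; simp
  rw [e, ZMod.val_natCast, Nat.mod_eq_of_lt]
  split_ifs <;> omega

theorem pt_inj (N : ℕ) (a : ZMod N) {i k : ℕ} (hi : i < N) (hk : k < N) :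
    pt N a i = pt N a k ↔ i = k := by
  constructor
  · intro h
    have := pt_sub_val N a hi hk
    rw [h, sub_self, ZMod.val_zero] at this
    split_ifs at this <;> omega
  · rintro rfl; rfl

theorem pt_surj (N : ℕ) (hN : 0 < N) (a z : ZMod N) : ∃ i < N, z = pt N a i := by
  haveI : NeZero N := ⟨by omega⟩
  refine ⟨(z - a).val, ZMod.val_lt _, ?_⟩
  simp [pt]

theorem pt_add (N : ℕ) (a : ZMod N) (i m : ℕ) : pt N a i + (m : ZMod N) = pt N a (i + m) := by
  simp [pt, add_assoc]

theorem pt_add_N (N : ℕ) (a : ZMod N) (i : ℕ) : pt N a (i + N) = pt N a i := by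
  simp [pt]

theorem seg_comm (N : ℕ) (a : ZMod N) (i j : ℕ) : seg N a i j = seg N a j i := by
  simp [seg, Finset.pair_comm]

theorem pair_eq {α : Type*} [DecidableEq α] {a b c d : α} (h : ({a, b} : Finset α) = {c, d}) :
    (a = c ∧ b = d) ∨ (a = d ∧ b = c) := by
  have ha : a ∈ ({c, d} : Finset α) := by rw [← h]; simp
  have hb : b ∈ ({c, d} : Finset α) := by rw [← h]; simp
  have hc : c ∈ ({a, b} : Finset α) := by rw [h]; simp
  have hd : d ∈ ({a, b} : Finset α) := by rw [h]; simp
  simp only [Finset.mem_insert, Finset.mem_singleton] at ha hb hc hd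
  grind

theorem seg_eq (N : ℕ) (a : ZMod N) {i j k l : ℕ} (hi : i < N) (hj : j < N) (hk : k < N)
    (hl : l < N) : seg N a i j = seg N a k l ↔ (i = k ∧ j = l) ∨ (i = l ∧ j = k) := by
  constructor
  · intro h
    have := pair_eq h
    rwa [pt_inj N a hi hk, pt_inj N a hj hl, pt_inj N a hi hl, pt_inj N a hj hk] at this
  · rintro (⟨rfl, rfl⟩ | ⟨rfl, rfl⟩)
    · rfl
    · exact seg_comm _ _ _ _

theorem crosses_seg (N : ℕ) (a : ZMod N) {i j k l : ℕ} (hij : i < j) (hj : j < N)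
    (hkl : k < l) (hl : l < N) :
    Crosses N (seg N a i j) (seg N a k l) ↔ (i < k ∧ k < j ∧ j < l) ∨ (k < i ∧ i < l ∧ l < j) := by
  have hi : i < N := by omega
  have hk : k < N := by omega
  constructor
  · rintro ⟨u, v, w, z, h1, h2, h3, h4⟩
    unfold StrictBtw at h3 h4
    rcases pair_eq h1 with ⟨rfl, rfl⟩ | ⟨rfl, rfl⟩ <;> rcases pair_eq h2 with ⟨rfl, rfl⟩ | ⟨rfl, rfl⟩ <;>
    · simp only [pt_sub_val N a, hi, hj, hk, hl] at h3 h4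
      split_ifs at h3 h4 <;> omega
  · rintro (h | h)
    · refine ⟨pt N a i, pt N a j, pt N a k, pt N a l, rfl, rfl, ?_, ?_⟩ <;> unfold StrictBtw <;>
      · simp only [pt_sub_val N a, hi, hj, hk, hl]
        split_ifs <;> omega
    · refine ⟨pt N a i, pt N a j, pt N a l, pt N a k, rfl, seg_comm _ _ _ _, ?_, ?_⟩ <;>
      unfold StrictBtw <;>
      · simp only [pt_sub_val N a, hi, hj, hk, hl]
        split_ifs <;> omega

theorem isDiag_seg (N : ℕ) (a : ZMod N) {i j : ℕ} (hij : i < j) (hj : j < N) :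
    IsDiag N (seg N a i j) ↔ i + 2 ≤ j ∧ ¬ (i = 0 ∧ j + 1 = N) := by
  have hi : i < N := by omega
  have e1 : pt N a j = pt N a i + 1 ↔ j = i + 1 := by
    have := pt_add N a i 1
    rw [Nat.cast_one] at this
    rw [this, pt_inj N a hj (by omega)]
  have e2 : pt N a i = pt N a j + 1 ↔ i = 0 ∧ j + 1 = N := by
    have := pt_add N a j 1
    rw [Nat.cast_one] at this
    rw [this]
    by_cases h : j + 1 = N
    · have := pt_add_N N a 0
      rw [h]
      rw [zero_add] at this
      rw [this, pt_inj N a hi (by omega)]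
      omega
    · rw [pt_inj N a hi (by omega)]; omega
  have e3 : ∀ x y : ZMod N, x = y - 1 ↔ y = x + 1 := by
    intro x y
    constructor
    · rintro rfl; ring
    · rintro rfl; ring
  constructor
  · rintro ⟨u, v, h, h1, h2, h3⟩
    rw [Ne, e3] at h3
    rcases pair_eq h with ⟨rfl, rfl⟩ | ⟨rfl, rfl⟩
    · rw [Ne, e1] at h2
      rw [e2] at h3
      exact ⟨by omega, h3⟩
    · rw [e1] at h3
      rw [Ne, e2] at h2
      exact ⟨by omega, h2⟩
  · rintro ⟨h1, h2⟩
    refine ⟨pt N a i, pt N a j, rfl, ?_, ?_, ?_⟩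
    · rw [Ne, pt_inj N a hj hi]; omega
    · rw [Ne, e1]; omega
    · rw [Ne, e3, e2]; exact h2

theorem exists_seg (N : ℕ) (hN : 0 < N) (a u v : ZMod N) (h : v ≠ u) :
    ∃ i j, i < j ∧ j < N ∧ ({u, v} : Finset (ZMod N)) = seg N a i j := by
  obtain ⟨i, hi, rfl⟩ := pt_surj N hN a u
  obtain ⟨j, hj, rfl⟩ := pt_surj N hN a v
  rw [Ne, pt_inj N a hj hi] at h
  rcases lt_or_gt_of_ne h with h | h
  · exact ⟨j, i, h, hi, seg_comm _ _ _ _⟩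
  · exact ⟨i, j, h, hj, rfl⟩

theorem exists_seg_of_isDiag (N : ℕ) (hN : 0 < N) (a : ZMod N) (e : Finset (ZMod N))
    (h : IsDiag N e) : ∃ i j, i < j ∧ j < N ∧ e = seg N a i j := by
  obtain ⟨u, v, rfl, h, -, -⟩ := h
  exact exists_seg N hN a u v h

theorem centralSym_seg (n : ℕ) (a : ZMod (2 * n)) (i j : ℕ) :
    centralSym n (seg (2 * n) a i j) = seg (2 * n) a (i + n) (j + n) := by
  simp [centralSym, seg, pt_add, Finset.image_insert]

theorem seg_wrap_right (n : ℕ) (a : ZMod (2 * n)) (i j : ℕ) :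
    seg (2 * n) a i (j + n + n) = seg (2 * n) a i j := by
  have := pt_add_N (2 * n) a j
  rw [show j + 2 * n = j + n + n by ring] at this
  simp [seg, this]

/-- antipode of a segment in the lower half. -/
theorem centralSym_half (n : ℕ) (a : ZMod (2 * n)) {i j : ℕ} (hij : i < j) (hj : j ≤ n)
    (h : ¬ (i = 0 ∧ j = n)) :
    ∃ k l, k < l ∧ l < 2 * n ∧ centralSym n (seg (2 * n) a i j) = seg (2 * n) a k l ∧
      ((j < n ∧ k = i + n ∧ l = j + n) ∨ (j = n ∧ k = 0 ∧ l = i + n)) := by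
  rcases hj.lt_or_eq with hj | hj
  · exact ⟨i + n, j + n, by omega, by omega, centralSym_seg _ _ _ _, by omega⟩
  · refine ⟨0, i + n, by omega, by omega, ?_, by omega⟩
    rw [centralSym_seg, seg_comm (2 * n) a 0, hj]
    simpa using seg_wrap_right n a (i + n) 0

theorem isDiameter_seg (n : ℕ) (hn : 0 < n) (a : ZMod (2 * n)) {i j : ℕ} (hij : i < j)
    (hj : j < 2 * n) : IsDiameter n (seg (2 * n) a i j) ↔ j = i + n := by
  constructor
  · rintro ⟨u, h⟩
    obtain ⟨k, hk, rfl⟩ := pt_surj (2 * n) (by omega) a u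
    rw [pt_add] at h
    change _ = seg (2 * n) a k (k + n) at h
    by_cases h' : k + n < 2 * n
    · rw [seg_eq _ _ (by omega) hj hk h'] at h
      omega
    · obtain ⟨m, rfl⟩ : ∃ m, k = m + n := ⟨k - n, by omega⟩
      rw [seg_wrap_right, seg_eq _ _ (by omega) hj hk (by omega)] at h
      omega
  · rintro rfl
    exact ⟨pt (2 * n) a i, by rw [pt_add]; rfl⟩

/-- colored diameter -/
def col {n : ℕ} (c : Bool) (e : Finset (ZMod (2 * n))) : DElem n :=
  if c then DElem.red e else DElem.blue e

theorem memM_col {n : ℕ} (c : Bool) (e : Finset (ZMod (2 * n))) :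
    memM n (col c e) ↔ IsDiag (2 * n) e ∧ IsDiameter n e := by
  cases c <;> simp [col, memM]

theorem col_compat_pair {n : ℕ} (c : Bool) (e : Finset (ZMod (2 * n))) (s) :
    DCompat n (col c e) (.pair s) ↔ ∀ f ∈ s, ¬ Crosses (2 * n) e f := by
  cases c <;> simp [col, DCompat]

theorem pair_compat_col {n : ℕ} (c : Bool) (e : Finset (ZMod (2 * n))) (s) :
    DCompat n (.pair s) (col c e) ↔ ∀ f ∈ s, ¬ Crosses (2 * n) e f := by
  cases c <;> simp [col, DCompat]

theorem col_compat_col {n : ℕ} (c d : Bool) (e f : Finset (ZMod (2 * n))) :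
    DCompat n (col c e) (col d f) ↔ (c = d ∨ e = f) := by
  cases c <;> cases d <;> simp [col, DCompat]

theorem col_eq_col {n : ℕ} (c d : Bool) (e f : Finset (ZMod (2 * n))) :
    col c e = col d f ↔ c = d ∧ e = f := by
  cases c <;> cases d <;> simp [col]

theorem col_ne_pair {n : ℕ} (c : Bool) (e : Finset (ZMod (2 * n))) (s) :
    col c e ≠ .pair s := by
  cases c <;> simp [col]

/-- index set for the diagonals of the `(n+2)`-gon -/
def Idx (n : ℕ) (i j : ℕ) : Prop := i + 2 ≤ j ∧ j ≤ n + 1 ∧ ¬ (i = 0 ∧ j = n + 1)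

/-- the map from indices to the type `D_n` model -/
def F (n : ℕ) (a : ZMod (2 * n)) (c : Bool) (i j : ℕ) : DElem n :=
  if j = n + 1 then col c (seg (2 * n) a i (i + n))
  else if i = 0 ∧ j = n then col (!c) (seg (2 * n) a 0 n)
  else .pair {seg (2 * n) a i j, centralSym n (seg (2 * n) a i j)}

theorem F_cases (n : ℕ) (a : ZMod (2 * n)) (c : Bool) {i j : ℕ} (h : Idx n i j) :
    (j = n + 1 ∧ 1 ≤ i ∧ i < n ∧ F n a c i j = col c (seg (2 * n) a i (i + n))) ∨
    (i = 0 ∧ j = n ∧ 2 ≤ n ∧ F n a c i j = col (!c) (seg (2 * n) a 0 n)) ∨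
    (j ≤ n ∧ i + 2 ≤ j ∧ ¬ (i = 0 ∧ j = n) ∧ ∃ k l, k < l ∧ l < 2 * n ∧
      ((j < n ∧ k = i + n ∧ l = j + n) ∨ (j = n ∧ k = 0 ∧ l = i + n)) ∧
      centralSym n (seg (2 * n) a i j) = seg (2 * n) a k l ∧
      F n a c i j = .pair {seg (2 * n) a i j, seg (2 * n) a k l}) := by
  unfold Idx at h
  unfold F
  split_ifs with h1 h2
  · left; exact ⟨h1, by omega, by omega, rfl⟩
  · right; left; exact ⟨h2.1, h2.2, by omega, rfl⟩
  · right; right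
    obtain ⟨k, l, hkl, hl, he, hc⟩ :=
      centralSym_half n a (i := i) (j := j) (by omega) (by omega) h2
    exact ⟨by omega, by omega, h2, k, l, hkl, hl, hc, he, by rw [he]⟩

theorem F_mem (n : ℕ) (a : ZMod (2 * n)) (c : Bool) {i j : ℕ} (h : Idx n i j) :
    memM n (F n a c i j) ∧ F n a c i j ≠ col c (seg (2 * n) a 0 n) ∧
      DCompat n (col c (seg (2 * n) a 0 n)) (F n a c i j) := by
  rcases F_cases n a c h with ⟨h1, h2, h3, e⟩ | ⟨h1, h2, h3, e⟩ | ⟨h1, h2, h3, k, l, hkl, hl, hc, he, e⟩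
  · rw [e, memM_col, Ne, col_eq_col, col_compat_col, seg_eq, isDiag_seg, isDiameter_seg] <;>
      first | omega | simp
    omega
  · rw [e, memM_col, Ne, col_eq_col, col_compat_col, isDiag_seg, isDiameter_seg] <;>
      first | omega | simp
    omega
  · rw [e, col_compat_pair]
    refine ⟨⟨seg (2 * n) a i j, ?_, ?_, by rw [he]⟩, (col_ne_pair _ _ _).symm, ?_⟩
    · rw [isDiag_seg] <;> omega
    · rw [isDiameter_seg] <;> omega
    · simp only [Finset.mem_insert, Finset.mem_singleton, forall_eq_or_imp, forall_eq]
      rw [crosses_seg, crosses_seg] <;> omega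

theorem F_inj (n : ℕ) (a : ZMod (2 * n)) (c : Bool) {i j i' j' : ℕ} (h : Idx n i j)
    (h' : Idx n i' j') (hF : F n a c i j = F n a c i' j') : i = i' ∧ j = j' := by
  rcases F_cases n a c h with ⟨h1, h2, h3, e⟩ | ⟨h1, h2, h3, e⟩ | ⟨h1, h2, h3, k, l, hkl, hl, hc, he, e⟩ <;>
  rcases F_cases n a c h' with ⟨h1', h2', h3', e'⟩ | ⟨h1', h2', h3', e'⟩ |
    ⟨h1', h2', h3', k', l', hkl', hl', hc', he', e'⟩ <;> rw [e, e'] at hF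
  · rw [col_eq_col, seg_eq] at hF <;> omega
  · rw [col_eq_col] at hF; simp at hF
  · exact absurd hF (col_ne_pair _ _ _)
  · rw [col_eq_col] at hF; simp at hF
  · omega
  · exact absurd hF (col_ne_pair _ _ _)
  · exact absurd hF.symm (col_ne_pair _ _ _)
  · exact absurd hF.symm (col_ne_pair _ _ _)
  · have := pair_eq (DElem.pair.inj hF)
    rw [seg_eq, seg_eq, seg_eq, seg_eq] at this <;> omega

theorem F_surj (n : ℕ) (hn : 2 ≤ n) (a : ZMod (2 * n)) (c : Bool) (y : DElem n)
    (hy : memM n y) (hne : y ≠ col c (seg (2 * n) a 0 n))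
    (hc : DCompat n (col c (seg (2 * n) a 0 n)) y) :
    ∃ i j, Idx n i j ∧ F n a c i j = y := by
  have key : ∀ d e, y = col d e → ∃ i j, Idx n i j ∧ F n a c i j = y := by
    rintro d e rfl
    rw [memM_col] at hy
    rw [col_compat_col] at hc
    obtain ⟨i, j, hij, hj, rfl⟩ := exists_seg_of_isDiag _ (by omega) a _ hy.1
    rw [isDiameter_seg _ (by omega) _ hij hj] at hy
    obtain ⟨hd, rfl⟩ := hy
    by_cases hcd : d = c
    · subst hcd
      refine ⟨i, n + 1, ?_, by simp [F]⟩
      have : i ≠ 0 := by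
        rintro rfl
        simp at hne
      unfold Idx; omega
    · have h0 := hc.resolve_left (Ne.symm hcd)
      have hd : d = !c := by cases c <;> cases d <;> simp_all
      refine ⟨0, n, by unfold Idx; omega, ?_⟩
      rw [← h0, hd]
      simp [F]
  have key2 : ∀ i j s, i < j → j ≤ n → IsDiag (2 * n) (seg (2 * n) a i j) →
      ¬ (i = 0 ∧ j = n) → s = {seg (2 * n) a i j, centralSym n (seg (2 * n) a i j)} →
      ∃ i j, Idx n i j ∧ F n a c i j = .pair s := by
    rintro i j s hij hj hd h0 rfl
    rw [isDiag_seg _ _ hij (by omega)] at hd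
    refine ⟨i, j, by unfold Idx; omega, ?_⟩
    rw [F, if_neg (by omega), if_neg h0]
  cases y with
  | red e => exact key true e rfl
  | blue e => exact key false e rfl
  | pair s =>
    obtain ⟨e, hd, hdm, rfl⟩ := hy
    obtain ⟨i, j, hij, hj, rfl⟩ := exists_seg_of_isDiag _ (by omega) a _ hd
    rw [isDiameter_seg _ (by omega) _ hij hj] at hdm
    rw [col_compat_pair] at hc
    have hc1 := hc _ (Finset.mem_insert_self _ _)
    rw [crosses_seg _ _ (by omega) (by omega) hij hj] at hc1
    by_cases h1 : j ≤ n
    · exact key2 i j _ hij h1 hd (by omega) rfl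
    · have hd' := hd
      rw [isDiag_seg _ _ hij hj] at hd'
      rcases Nat.eq_zero_or_pos i with rfl | hi
      · obtain ⟨m, rfl⟩ : ∃ m, j = m + n := ⟨j - n, by omega⟩
        have e1 : centralSym n (seg (2 * n) a m n) = seg (2 * n) a 0 (m + n) := by
          rw [centralSym_seg, seg_comm (2 * n) a 0]
          simpa using seg_wrap_right n a (m + n) 0
        have e2 : centralSym n (seg (2 * n) a 0 (m + n)) = seg (2 * n) a m n := by
          rw [centralSym_seg, seg_wrap_right, seg_comm, zero_add]
        refine key2 m n _ (by omega) le_rfl ?_ (by omega) ?_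
        · rw [isDiag_seg] <;> omega
        · rw [e1, e2, Finset.pair_comm]
      · obtain ⟨m, rfl⟩ : ∃ m, j = m + n := ⟨j - n, by omega⟩
        obtain ⟨k, rfl⟩ : ∃ k, i = k + n := ⟨i - n, by omega⟩
        have e1 : centralSym n (seg (2 * n) a k m) = seg (2 * n) a (k + n) (m + n) :=
          centralSym_seg _ _ _ _
        have e2 : centralSym n (seg (2 * n) a (k + n) (m + n)) = seg (2 * n) a k m := by
          rw [centralSym_seg, seg_wrap_right, seg_comm, seg_wrap_right, seg_comm]
        refine key2 k m _ (by omega) (by omega) ?_ (by omega) ?_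
        · rw [isDiag_seg] <;> omega
        · rw [e1, e2, Finset.pair_comm]

theorem F_compat (n : ℕ) (a : ZMod (2 * n)) (c : Bool) {i j i' j' : ℕ} (h : Idx n i j)
    (h' : Idx n i' j') (hne : ¬ (i = i' ∧ j = j')) :
    DCompat n (F n a c i j) (F n a c i' j') ↔
      ¬ ((i < i' ∧ i' < j ∧ j < j') ∨ (i' < i ∧ i < j' ∧ j' < j)) := by
  rcases F_cases n a c h with ⟨h1, h2, h3, e⟩ | ⟨h1, h2, h3, e⟩ | ⟨h1, h2, h3, k, l, hkl, hl, hc, he, e⟩ <;>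
  rcases F_cases n a c h' with ⟨h1', h2', h3', e'⟩ | ⟨h1', h2', h3', e'⟩ |
    ⟨h1', h2', h3', k', l', hkl', hl', hc', he', e'⟩ <;> rw [e, e']
  · rw [col_compat_col]; simp; omega
  · rw [col_compat_col, seg_eq] <;> first | omega | simp
    omega
  · rw [col_compat_pair]
    simp only [Finset.mem_insert, Finset.mem_singleton, forall_eq_or_imp, forall_eq]
    rw [crosses_seg, crosses_seg] <;> omega
  · rw [col_compat_col, seg_eq] <;> first | omega | simp
    omega
  · omega
  · rw [col_compat_pair]
    simp only [Finset.mem_insert, Finset.mem_singleton, forall_eq_or_imp, forall_eq]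
    rw [crosses_seg, crosses_seg] <;> omega
  · rw [pair_compat_col]
    simp only [Finset.mem_insert, Finset.mem_singleton, forall_eq_or_imp, forall_eq]
    rw [crosses_seg, crosses_seg] <;> omega
  · rw [pair_compat_col]
    simp only [Finset.mem_insert, Finset.mem_singleton, forall_eq_or_imp, forall_eq]
    rw [crosses_seg, crosses_seg] <;> omega
  · simp only [DCompat, Finset.mem_insert, Finset.mem_singleton, forall_eq_or_imp, forall_eq]
    rw [crosses_seg, crosses_seg, crosses_seg, crosses_seg] <;> omega

/-- the link of a colored diameter in the type `D_n` model is isomorphic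
to the type `A_{n-1}` model, i.e. the diagonals of a convex `(n+2)`-gon. -/
theorem link_of_diameter (n : ℕ) (hn : 2 ≤ n) (x : MSet n)
    (hx : ∃ e, x.1 = DElem.red e ∨ x.1 = DElem.blue e) :
    ∃ β : {y : MSet n // y ≠ x ∧ DCompat n x.1 y.1} ≃
          {e : Finset (ZMod (n + 2)) // IsDiag (n + 2) e},
      ∀ y₁ y₂, y₁ ≠ y₂ →
        (DCompat n y₁.1.1 y₂.1.1 ↔ ¬ Crosses (n + 2) (β y₁).1 (β y₂).1) := by
  obtain ⟨c, a, hxa⟩ : ∃ (c : Bool) (a : ZMod (2 * n)), x.1 = col c (seg (2 * n) a 0 n) := by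
    have h2 : ∃ c e, x.1 = col c e := by
      obtain ⟨e, h | h⟩ := hx
      · exact ⟨true, e, h⟩
      · exact ⟨false, e, h⟩
    obtain ⟨c, e, h⟩ := h2
    have hm := x.2
    rw [h, memM_col] at hm
    obtain ⟨-, a, rfl⟩ := hm
    exact ⟨c, a, by rw [h]; simp [seg, pt]⟩
  let T := {t : ℕ × ℕ // Idx n t.1 t.2}
  have hf (t : T) := F_mem n a c t.2
  let f : T → {y : MSet n // y ≠ x ∧ DCompat n x.1 y.1} := fun t =>
    ⟨⟨F n a c t.1.1 t.1.2, (hf t).1⟩, fun h => (hf t).2.1 (by rw [← hxa, ← h]),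
      by rw [hxa]; exact (hf t).2.2⟩
  have fb : Function.Bijective f := by
    constructor
    · intro t t' h
      have h1 : F n a c t.1.1 t.1.2 = F n a c t'.1.1 t'.1.2 :=
        congrArg (fun y => y.1.1) h
      have := F_inj n a c t.2 t'.2 h1
      exact Subtype.ext (Prod.ext this.1 this.2)
    · rintro ⟨⟨y, hy⟩, hne, hcy⟩
      rw [hxa] at hcy
      obtain ⟨i, j, hI, h⟩ := F_surj n hn a c y hy
        (fun h => hne (Subtype.ext (h.trans hxa.symm))) hcy
      exact ⟨⟨(i, j), hI⟩, Subtype.ext (Subtype.ext h)⟩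
  have hg (t : T) : IsDiag (n + 2) (seg (n + 2) 0 t.1.1 t.1.2) := by
    have := t.2
    unfold Idx at this
    rw [isDiag_seg] <;> omega
  let g : T → {e : Finset (ZMod (n + 2)) // IsDiag (n + 2) e} := fun t => ⟨_, hg t⟩
  have gb : Function.Bijective g := by
    constructor
    · intro t t' h
      have h1 : seg (n + 2) 0 t.1.1 t.1.2 = seg (n + 2) 0 t'.1.1 t'.1.2 :=
        congrArg (fun y => y.1) h
      have ht := t.2
      have ht' := t'.2
      unfold Idx at ht ht'
      rw [seg_eq _ _ (by omega) (by omega) (by omega) (by omega)] at h1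
      exact Subtype.ext (Prod.ext (by omega) (by omega))
    · rintro ⟨e, he⟩
      obtain ⟨i, j, hij, hj, rfl⟩ := exists_seg_of_isDiag _ (by omega) 0 _ he
      have he' := he
      rw [isDiag_seg _ _ hij hj] at he'
      exact ⟨⟨(i, j), by unfold Idx; dsimp only; omega⟩, rfl⟩
  refine ⟨(Equiv.ofBijective f fb).symm.trans (Equiv.ofBijective g gb), ?_⟩
  intro y₁ y₂ hne
  obtain ⟨t₁, rfl⟩ := fb.2 y₁
  obtain ⟨t₂, rfl⟩ := fb.2 y₂
  have e (t : T) : (Equiv.ofBijective f fb).symm (f t) = t :=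
    (Equiv.ofBijective f fb).symm_apply_apply t
  simp only [Equiv.trans_apply, e, Equiv.ofBijective_apply]
  change DCompat n (F n a c t₁.1.1 t₁.1.2) (F n a c t₂.1.1 t₂.1.2) ↔
    ¬ Crosses (n + 2) (seg (n + 2) 0 t₁.1.1 t₁.1.2) (seg (n + 2) 0 t₂.1.1 t₂.1.2)
  have ht₁ := t₁.2
  have ht₂ := t₂.2
  rw [F_compat n a c ht₁ ht₂]
  · unfold Idx at ht₁ ht₂
    rw [crosses_seg] <;> omega
  · rintro ⟨h1, h2⟩
    exact hne (congrArg f (Subtype.ext (Prod.ext h1 h2)))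

end GalD
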